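/- arXiv:2004.14929 — 3 statements merged into one kernel-verified Lean document; each statement's English description precedes it below -/
import Mathlib

section
/- Let n ≥ 2, d ≥ 1 be integers, let δ_1, …, δ_{d+1} ∈ ℝ^d be separated, and let 𝐚_1, …, 𝐚_{d+1} be sequences of digit vectors in {0,…,n−1}^d with location functions ℒ_{𝐚_i}. Then the n-adic grids 𝒢(δ_1, ℒ_{𝐚_1}), …, 𝒢(δ_{d+1}, ℒ_{𝐚_{d+1}}) are adjacent if and only if both of the following hold: (i) for each i ∈ {1,…,d+1}, δ_i is an n-far vector with respect to 𝔏(δ_1, …, δ̂_i, …, δ_{d+1}) (the small scale lattices formed by the d remaining initial points, δ_i omitted); (ii) for each i ∈ {1,…,d+1}, 0 < liminf_{j→∞} dist( (m𝒞)_{𝐚_i}^{δ_i}(j), 𝒮_î(j) ) / n^j ≤ limsup_{j→∞} ( max_{y' ∈ 𝒮_î(j)} dev( (m𝒞)_{𝐚_i}^{δ_i}(j), y' ) ) / n^j < 1, where 𝒮_î(j) denotes the large scale sampling at level j associated to the d tuples (δ_ℓ, 𝐚_ℓ) with ℓ ≠ i. -/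
/-! Everything reduces to one condition on the initial points of the grids: there is `c > 0` such
that, in every generation (sidelength `L = n^k`, `k ∈ ℤ`), for any two grids and any coordinate
`s`, the `s`-th coordinates of the two initial points are at circular distance at least `c L`
modulo `L` (`Separated`).

*Adjacency is this condition* (`adjacent_iff`). If it holds, take a cube of side less than `c L`.
In each coordinate at most one grid has a hyperplane cutting the interior of the cube, so at most
`d` of the `d + 1` grids cut it; the remaining grid contains the cube in one of its cubes of side
`L`. If it fails, two grids have almost coinciding hyperplanes in some coordinate `s`. Distributing
the other `d - 1` grids over the other `d - 1` coordinates yields a cube, tiny compared with `L`,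
that is cut by all `d + 1` grids. Since generations are nested, it is cut in all finer generations
too.

*For `L = n^{-m}`* the condition is the `n`-far condition (`separated_small_iff`): when no two grids share a
coordinate modulo `L`, a point of the intersection of `d` meshes uses each coordinate exactly once,
so its distance to the remaining mesh is at least the smallest circular distance; conversely every
circular distance occurs as the distance of a lattice point to a point of the remaining mesh.

*For `L = n^j`* the sets are cut down to `[0, L)^d`, so the non-circular distances `t` of
representatives in `[0, L)` appear. The set distance is at most every such `t` and at least
the least circular distance, the maximal deviation is the maximum of the `t`, and `c L ≤ t ≤ (1 - c) L` says exactly that the circular distance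
is at least `c L` (`circ_iff`). The liminf and limsup give this for large `j` only; for each of the
finitely many remaining `j` some positive constant works because the initial points are separated
(`separated_large_iff`). -/

open scoped BigOperators

/-- The half-open cube `[x₁, x₁+ℓ) × ⋯ × [x_d, x_d+ℓ)` in `ℝ^d`. -/
def HalfOpenCube (d : ℕ) (x : Fin d → ℝ) (ℓ : ℝ) : Set (Fin d → ℝ) :=
  {y | ∀ i, x i ≤ y i ∧ y i < x i + ℓ}

/-- `G` is an `n`-adic grid in `ℝ^d`. -/
def IsNAdicGrid (n d : ℕ) (G : Set (Set (Fin d → ℝ))) : Prop :=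
  (∀ Q ∈ G, ∃ (x : Fin d → ℝ) (k : ℤ), Q = HalfOpenCube d x ((n : ℝ) ^ k)) ∧
  (∀ Q ∈ G, ∀ R ∈ G, Q ∩ R = Q ∨ Q ∩ R = R ∨ Q ∩ R = ∅) ∧
  (∀ k : ℤ, ∀ y : Fin d → ℝ,
    ∃! Q, Q ∈ G ∧ (∃ x : Fin d → ℝ, Q = HalfOpenCube d x ((n : ℝ) ^ k)) ∧ y ∈ Q)

/-- A family of `N` `n`-adic grids in `ℝ^d` is adjacent: there is a constant `C > 0` such
that every half-open cube is contained in some cube of one of the grids whose sidelength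
is at most `C` times its own. -/
def IsAdjacentFamily (n d N : ℕ) (G : Fin N → Set (Set (Fin d → ℝ))) : Prop :=
  ∃ C > (0 : ℝ), ∀ (x : Fin d → ℝ) (ℓ : ℝ), 0 < ℓ →
    ∃ (i : Fin N) (R : Set (Fin d → ℝ)), R ∈ G i ∧ HalfOpenCube d x ℓ ⊆ R ∧
      ∃ (y : Fin d → ℝ) (s : ℝ), R = HalfOpenCube d y s ∧ s ≤ C * ℓ

/-- The location function `ℒ_𝐚(j) = Σ_{k<j} n^k a_k` associated to a digit-vector sequence. -/
def locFun (n d : ℕ) (a : ℕ → Fin d → ℕ) (j : ℕ) (i : Fin d) : ℤ :=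
  ∑ k ∈ Finset.range j, (n : ℤ) ^ k * (a k i : ℤ)

/-- The `n`-adic grid `𝒢(δ, ℒ_𝐚)`: for `m ≥ 0` the `m`-th generation consists of the cubes
`δ + n^{-m}(k + [0,1)^d)`, and for `m = -j < 0` of the cubes `δ + ℒ_𝐚(j) + n^{j}(k + [0,1)^d)`. -/
def GridRep (n d : ℕ) (δ : Fin d → ℝ) (a : ℕ → Fin d → ℕ) : Set (Set (Fin d → ℝ)) :=
  {Q | (∃ (m : ℕ) (k : Fin d → ℤ),
          Q = HalfOpenCube d (fun i => δ i + (k i) * (n : ℝ) ^ (-(m : ℤ))) ((n : ℝ) ^ (-(m : ℤ)))) ∨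
       (∃ (j : ℕ) (k : Fin d → ℤ), 0 < j ∧
          Q = HalfOpenCube d (fun i => δ i + (locFun n d a j i : ℝ) + (k i) * (n : ℝ) ^ (j : ℕ))
              ((n : ℝ) ^ (j : ℕ)))}

/-- A real number `δ` is `n`-far: `|δ - k/n^m| ≥ C/n^m` for all `m ≥ 0`, `k ∈ ℤ`. -/
def IsNFar (n : ℕ) (δ : ℝ) : Prop :=
  ∃ C > (0 : ℝ), ∀ (m : ℕ) (k : ℤ), C / (n : ℝ) ^ m ≤ |δ - (k : ℝ) / (n : ℝ) ^ m|

/-- The union of the boundaries of the cubes of the `m`-th generation (`m ≥ 0`) of the grid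
with initial point `δ`. -/
def bdryPos (n d : ℕ) (δ : Fin d → ℝ) (m : ℕ) : Set (Fin d → ℝ) :=
  {x | ∃ (s : Fin d) (k : ℤ), x s - δ s = (k : ℝ) * (n : ℝ) ^ (-(m : ℤ))}

/-- The union of the boundaries of the cubes of the `(−j)`-th generation (`j > 0`) of the
grid `𝒢(δ, ℒ_𝐚)`. -/
def bdryNeg (n d : ℕ) (δ : Fin d → ℝ) (a : ℕ → Fin d → ℕ) (j : ℕ) : Set (Fin d → ℝ) :=
  {x | ∃ (s : Fin d) (k : ℤ), x s - (δ s + (locFun n d a j s : ℝ)) = (k : ℝ) * (n : ℝ) ^ j}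

/-- The cube `[0, n^j)^d`. -/
def box (n d j : ℕ) : Set (Fin d → ℝ) :=
  {x | ∀ s : Fin d, 0 ≤ x s ∧ x s < (n : ℝ) ^ j}

/-- Euclidean distance on `ℝ^d`. -/
noncomputable def eDist (d : ℕ) (x y : Fin d → ℝ) : ℝ :=
  Real.sqrt (∑ i, (x i - y i) ^ 2)

/-- Euclidean distance between two subsets of `ℝ^d`. -/
noncomputable def setDist (d : ℕ) (A B : Set (Fin d → ℝ)) : ℝ :=
  sInf {r : ℝ | ∃ x ∈ A, ∃ y ∈ B, r = eDist d x y}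

/-- The directional distance `dist_{e_k}(A, x) = inf { |t| : x + t e_k ∈ A }`. -/
noncomputable def distDir (d : ℕ) (A : Set (Fin d → ℝ)) (x : Fin d → ℝ) (k : Fin d) : ℝ :=
  sInf {r : ℝ | ∃ t : ℝ, r = |t| ∧ (fun i => if i = k then x i + t else x i) ∈ A}

/-- The natural deviation `dev(A, x) = max_k dist_{e_k}(A, x)`. -/
noncomputable def dev (d : ℕ) (A : Set (Fin d → ℝ)) (x : Fin d → ℝ) : ℝ :=
  ⨆ k : Fin d, distDir d A x k

/-! ### A single generation -/

/-- The union of the hyperplanes `x_s ∈ q_s + Lℤ`: the boundary of a mesh of cubes of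
sidelength `L` with initial point `q`. -/
def mesh (d : ℕ) (L : ℝ) (q : Fin d → ℝ) : Set (Fin d → ℝ) :=
  {x | ∃ (s : Fin d) (k : ℤ), x s - q s = (k : ℝ) * L}

/-- The intersection of the meshes of all grids except the `i`-th. -/
def meshInter (d : ℕ) (L : ℝ) (q : Fin (d + 1) → Fin d → ℝ) (i : Fin (d + 1)) :
    Set (Fin d → ℝ) :=
  ⋂ (l : Fin (d + 1)) (_ : l ≠ i), mesh d L (q l)

/-- The cube `[0, L)^d`. -/
def fundBox (d : ℕ) (L : ℝ) : Set (Fin d → ℝ) :=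
  {x | ∀ s : Fin d, 0 ≤ x s ∧ x s < L}

/-- The representative of `x` modulo `L` in `[0, L)`. -/
noncomputable def wrap (L x : ℝ) : ℝ := x - (⌊x / L⌋ : ℝ) * L

/-- The initial points `q` stay at circular distance at least `c` modulo `L` from one another,
coordinate by coordinate. -/
def Separated (d : ℕ) (L : ℝ) (q : Fin (d + 1) → Fin d → ℝ) (c : ℝ) : Prop :=
  ∀ i j, i ≠ j → ∀ (s : Fin d) (z : ℤ), c ≤ |q i s - q j s - z * L|

/-- No two of the initial points `q` share a coordinate modulo `L`. -/
def Distinct (d : ℕ) (L : ℝ) (q : Fin (d + 1) → Fin d → ℝ) : Prop :=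
  ∀ i j, i ≠ j → ∀ (s : Fin d) (z : ℤ), q i s - q j s ≠ z * L

lemma Separated.distinct {d : ℕ} {L c : ℝ} {q : Fin (d + 1) → Fin d → ℝ} (hc : 0 < c)
    (h : Separated d L q c) : Distinct d L q := by
  intro i j hij s z hz
  have := h i j hij s z
  rw [hz, sub_self, abs_zero] at this
  linarith

lemma wrap_nonneg {L : ℝ} (hL : 0 < L) (x : ℝ) : 0 ≤ wrap L x := by
  have h := Int.floor_le (x / L)
  rw [le_div_iff₀ hL] at h
  unfold wrap; linarith

lemma wrap_lt {L : ℝ} (hL : 0 < L) (x : ℝ) : wrap L x < L := by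
  have h := Int.lt_floor_add_one (x / L)
  rw [div_lt_iff₀ hL] at h
  unfold wrap; linarith

lemma wrap_sub (L x : ℝ) : wrap L x - x = ((-⌊x / L⌋ : ℤ) : ℝ) * L := by
  unfold wrap; push_cast; ring

lemma eq_wrap {L : ℝ} (hL : 0 < L) {x y : ℝ} (h0 : 0 ≤ y) (h1 : y < L) {k : ℤ}
    (h : y - x = k * L) : y = wrap L x := by
  have : ⌊x / L⌋ = -k := by
    rw [Int.floor_eq_iff, le_div_iff₀ hL, div_lt_iff₀ hL]
    push_cast
    constructor <;> linarith
  unfold wrap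
  rw [this]; push_cast; linarith

lemma abs_wrap_sub_wrap_lt {L : ℝ} (hL : 0 < L) (x y : ℝ) : |wrap L x - wrap L y| < L := by
  rw [abs_lt]
  constructor <;> linarith [wrap_nonneg hL x, wrap_nonneg hL y, wrap_lt hL x, wrap_lt hL y]

/-- The circular distance of `x` and `y` modulo `L` is the smaller of `t` and `L - t`, where `t`
is the distance of their representatives in `[0, L)`. -/
lemma circ_iff {L : ℝ} (hL : 0 < L) (x y c : ℝ) :
    (∀ z : ℤ, c ≤ |x - y - z * L|) ↔
      c ≤ |wrap L x - wrap L y| ∧ |wrap L x - wrap L y| ≤ L - c := by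
  have hx := wrap_sub L x
  have hy := wrap_sub L y
  have hlt := abs_wrap_sub_wrap_lt hL x y
  set a : ℤ := -⌊x / L⌋
  set b : ℤ := -⌊y / L⌋
  have key : ∀ z : ℤ, x - y - z * L = (wrap L x - wrap L y) - ((z + a - b : ℤ) : ℝ) * L := by
    intro z; push_cast; linarith
  constructor
  · intro h
    have h0 := h (b - a)
    have h1 := h (b - a + 1)
    have h2 := h (b - a - 1)
    rw [key] at h0 h1 h2
    set t := wrap L x - wrap L y
    have e0 : b - a + a - b = 0 := by ring
    have e1 : b - a + 1 + a - b = 1 := by ring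
    have e2 : b - a - 1 + a - b = -1 := by ring
    rw [e0] at h0; rw [e1] at h1; rw [e2] at h2
    push_cast at h0 h1 h2
    rw [abs_lt] at hlt
    rw [abs_of_nonpos (by linarith)] at h1
    rw [abs_of_nonneg (by linarith)] at h2
    refine ⟨by simpa using h0, ?_⟩
    rw [abs_le]; constructor <;> linarith
  · rintro ⟨h0, h1⟩ z
    rw [key]
    set t := wrap L x - wrap L y
    generalize z + a - b = w
    rw [abs_le] at h1
    rcases lt_trichotomy w 0 with hw | hw | hw
    · have : (w : ℝ) ≤ -1 := by exact_mod_cast (by omega : w ≤ -1)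
      refine le_trans ?_ (le_abs_self _)
      nlinarith
    · subst hw; simpa using h0
    · have : (1 : ℝ) ≤ w := by exact_mod_cast (by omega : 1 ≤ w)
      refine le_trans ?_ (neg_le_abs _)
      nlinarith

/-- The `d` grids other than `i` can be distributed over the `d` coordinates with a prescribed
grid `j` at a prescribed coordinate `s`. -/
lemma exists_assignment {d : ℕ} {i j : Fin (d + 1)} (hij : i ≠ j) (s : Fin d) :
    ∃ σ : Fin d → Fin (d + 1), σ s = j ∧ (∀ t, σ t ≠ i) ∧ ∀ l, l ≠ i → ∃ t, σ t = l := by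
  obtain ⟨t₀, ht₀⟩ := Fin.exists_succAbove_eq hij.symm
  refine ⟨fun t => i.succAbove (Equiv.swap s t₀ t), by simp [ht₀],
    fun t => Fin.succAbove_ne _ _, fun l hl => ?_⟩
  obtain ⟨t, ht⟩ := Fin.exists_succAbove_eq hl
  exact ⟨Equiv.swap s t₀ t, by simp [ht]⟩

lemma mem_meshInter {d : ℕ} {L : ℝ} {q : Fin (d + 1) → Fin d → ℝ} {i : Fin (d + 1)}
    {σ : Fin d → Fin (d + 1)} (hσ : ∀ l, l ≠ i → ∃ t, σ t = l) {y : Fin d → ℝ}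
    (hy : ∀ t, ∃ k : ℤ, y t - q (σ t) t = k * L) : y ∈ meshInter d L q i := by
  simp only [meshInter, Set.mem_iInter]
  intro l hl
  obtain ⟨t, rfl⟩ := hσ l hl
  obtain ⟨k, hk⟩ := hy t
  exact ⟨t, k, hk⟩

/-- By pigeonhole, when the initial points are distinct, the `d` meshes through a point of
`meshInter` use up all `d` coordinates. -/
lemma meshInter_coord {d : ℕ} {L : ℝ} {q : Fin (d + 1) → Fin d → ℝ} (hq : Distinct d L q)
    {i : Fin (d + 1)} {y : Fin d → ℝ} (hy : y ∈ meshInter d L q i) (s : Fin d) :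
    ∃ l, l ≠ i ∧ ∃ k : ℤ, y s - q l s = k * L := by
  simp only [meshInter, Set.mem_iInter] at hy
  have h : ∀ t : Fin d, ∃ (s : Fin d) (k : ℤ), y s - q (i.succAbove t) s = k * L :=
    fun t => hy _ (Fin.succAbove_ne _ _)
  choose τ k hk using h
  have hinj : Function.Injective τ := by
    intro t t' htt
    by_contra hne
    refine hq (i.succAbove t) (i.succAbove t')
      (fun h => hne (Fin.succAbove_right_injective h)) (τ t) (k t' - k t) ?_
    have h1 := hk t
    have h2 := hk t'
    rw [← htt] at h2
    push_cast
    linarith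
  obtain ⟨t, rfl⟩ := Finite.injective_iff_surjective.mp hinj s
  exact ⟨_, Fin.succAbove_ne _ _, _, hk t⟩

lemma abs_le_eDist {d : ℕ} (x y : Fin d → ℝ) (s : Fin d) : |x s - y s| ≤ eDist d x y := by
  unfold eDist
  apply Real.abs_le_sqrt
  exact Finset.single_le_sum (f := fun i => (x i - y i) ^ 2) (fun i _ => sq_nonneg _)
    (Finset.mem_univ s)

lemma eDist_update {d : ℕ} (y : Fin d → ℝ) (s : Fin d) (v : ℝ) :
    eDist d (Function.update y s v) y = |v - y s| := by
  unfold eDist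
  rw [Finset.sum_eq_single s]
  · simp [Real.sqrt_sq_eq_abs]
  · intro t _ ht; simp [Function.update_of_ne ht]
  · simp

lemma setDist_le {d : ℕ} {A B : Set (Fin d → ℝ)} {x y : Fin d → ℝ} (hx : x ∈ A) (hy : y ∈ B) :
    setDist d A B ≤ eDist d x y := by
  refine csInf_le ?_ ?_
  · exact ⟨0, by rintro r ⟨x, -, y, -, rfl⟩; exact Real.sqrt_nonneg _⟩
  · exact ⟨x, hx, y, hy, rfl⟩

lemma le_setDist {d : ℕ} {A B : Set (Fin d → ℝ)} {c : ℝ} (hA : A.Nonempty) (hB : B.Nonempty)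
    (h : ∀ x ∈ A, ∀ y ∈ B, c ≤ eDist d x y) : c ≤ setDist d A B := by
  obtain ⟨x, hx⟩ := hA
  obtain ⟨y, hy⟩ := hB
  refine le_csInf ⟨_, x, hx, y, hy, rfl⟩ ?_
  rintro r ⟨x, hx, y, hy, rfl⟩
  exact h x hx y hy

/-- A lattice point lying on grid `j` in the coordinate `s`, moved onto grid `i` in that
coordinate. -/
lemma setDist_mesh_le {d : ℕ} {L : ℝ} (q : Fin (d + 1) → Fin d → ℝ)
    {i j : Fin (d + 1)} (hij : i ≠ j) (s : Fin d) (z : ℤ) :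
    setDist d (mesh d L (q i)) (meshInter d L q i) ≤ |q i s - q j s - z * L| := by
  obtain ⟨σ, hs, -, hσ⟩ := exists_assignment hij s
  have hy : (fun t => q (σ t) t) ∈ meshInter d L q i :=
    mem_meshInter hσ fun t => ⟨0, by simp⟩
  have hx : Function.update (fun t => q (σ t) t) s (q i s - z * L) ∈ mesh d L (q i) :=
    ⟨s, -z, by simp⟩
  refine (setDist_le hx hy).trans (le_of_eq ?_)
  rw [eDist_update, hs]
  congr 1; ring

lemma le_eDist_of_sep {d : ℕ} {L c : ℝ} {q : Fin (d + 1) → Fin d → ℝ} (hc : 0 < c)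
    (h : Separated d L q c) {i : Fin (d + 1)} {x y : Fin d → ℝ} (hx : x ∈ mesh d L (q i))
    (hy : y ∈ meshInter d L q i) : c ≤ eDist d x y := by
  obtain ⟨s, k, hk⟩ := hx
  obtain ⟨l, hl, k', hk'⟩ := meshInter_coord (h.distinct hc) hy s
  refine le_trans ?_ (abs_le_eDist x y s)
  refine (h i l hl.symm s (k' - k)).trans (le_of_eq ?_)
  congr 1; push_cast; linarith

lemma le_setDist_mesh {d : ℕ} (hd : 1 ≤ d) {L c : ℝ} {q : Fin (d + 1) → Fin d → ℝ} (hc : 0 < c)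
    (h : Separated d L q c) (i : Fin (d + 1)) :
    c ≤ setDist d (mesh d L (q i)) (meshInter d L q i) := by
  refine le_setDist ⟨q i, ⟨0, hd⟩, 0, by simp⟩ ?_ fun x hx y hy => le_eDist_of_sep hc h hx hy
  exact ⟨fun t => q (i.succAbove t) t, mem_meshInter (σ := i.succAbove)
    (fun l hl => Fin.exists_succAbove_eq hl) fun t => ⟨0, by simp⟩⟩

/-! ### The large scale quantities inside the fundamental box -/

/-- The distance between the `i`-th mesh and the sampling of the other meshes in `[0, L)^d`. -/
noncomputable def boxDist (d : ℕ) (L : ℝ) (q : Fin (d + 1) → Fin d → ℝ) (i : Fin (d + 1)) : ℝ :=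
  setDist d (mesh d L (q i) ∩ fundBox d L) (meshInter d L q i ∩ fundBox d L)

/-- The maximal deviation of the `i`-th mesh from the sampling of the other meshes
in `[0, L)^d`. -/
noncomputable def boxDev (d : ℕ) (L : ℝ) (q : Fin (d + 1) → Fin d → ℝ) (i : Fin (d + 1)) : ℝ :=
  sSup ((fun y' => dev d (mesh d L (q i) ∩ fundBox d L) y') '' (meshInter d L q i ∩ fundBox d L))

lemma exists_box_point {d : ℕ} {L : ℝ} (hL : 0 < L) (q : Fin (d + 1) → Fin d → ℝ)
    {i j : Fin (d + 1)} (hij : i ≠ j) (s : Fin d) :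
    ∃ y ∈ meshInter d L q i ∩ fundBox d L, y s = wrap L (q j s) := by
  obtain ⟨σ, hs, -, hσ⟩ := exists_assignment hij s
  refine ⟨fun t => wrap L (q (σ t) t), ⟨mem_meshInter hσ fun t => ⟨_, wrap_sub _ _⟩,
    fun t => ⟨wrap_nonneg hL _, wrap_lt hL _⟩⟩, ?_⟩
  simp [hs]

lemma update_mem_box {d : ℕ} {L : ℝ} (hL : 0 < L) {p y : Fin d → ℝ}
    (hy : y ∈ fundBox d L) (s : Fin d) :
    Function.update y s (wrap L (p s)) ∈ mesh d L p ∩ fundBox d L := by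
  refine ⟨⟨s, _, by rw [Function.update_self]; exact wrap_sub L (p s)⟩, fun t => ?_⟩
  rcases eq_or_ne t s with rfl | ht
  · simpa using ⟨wrap_nonneg hL _, wrap_lt hL _⟩
  · simpa [Function.update_of_ne ht] using hy t

lemma boxDist_le {d : ℕ} {L : ℝ} (hL : 0 < L) (q : Fin (d + 1) → Fin d → ℝ)
    {i j : Fin (d + 1)} (hij : i ≠ j) (s : Fin d) :
    boxDist d L q i ≤ |wrap L (q i s) - wrap L (q j s)| := by
  obtain ⟨y, hy, hys⟩ := exists_box_point hL q hij s
  refine (setDist_le (update_mem_box hL hy.2 s) hy).trans (le_of_eq ?_)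
  rw [eDist_update, hys]

lemma boxDist_nonneg {d : ℕ} {L : ℝ} (q : Fin (d + 1) → Fin d → ℝ) (i : Fin (d + 1)) :
    0 ≤ boxDist d L q i := by
  apply Real.sInf_nonneg
  rintro r ⟨x, -, y, -, rfl⟩
  exact Real.sqrt_nonneg _

lemma le_boxDist {d : ℕ} (hd : 1 ≤ d) {L c : ℝ} (hL : 0 < L) {q : Fin (d + 1) → Fin d → ℝ}
    (hc : 0 < c) (h : Separated d L q c) (i : Fin (d + 1)) : c ≤ boxDist d L q i := by
  obtain ⟨y, hy, -⟩ := exists_box_point hL q (Fin.succAbove_ne i ⟨0, hd⟩).symm ⟨0, hd⟩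
  exact le_setDist ⟨_, update_mem_box hL hy.2 ⟨0, hd⟩⟩ ⟨y, hy⟩
    fun x hx y hy => le_eDist_of_sep hc h hx.1 hy.1

/-- A sampling point avoids the `i`-th mesh, and moving it in direction `e_s` meets that mesh
inside the box only where the `s`-th coordinate becomes the representative of `q_i`. -/
lemma distDir_eq {d : ℕ} {L : ℝ} (hL : 0 < L) {q : Fin (d + 1) → Fin d → ℝ}
    (hq : Distinct d L q) {i : Fin (d + 1)} {y : Fin d → ℝ}
    (hy : y ∈ meshInter d L q i ∩ fundBox d L) (s : Fin d) :
    distDir d (mesh d L (q i) ∩ fundBox d L) y s = |wrap L (q i s) - y s| := by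
  have hset : {r : ℝ | ∃ t : ℝ, r = |t| ∧ (fun i => if i = s then y i + t else y i) ∈
      mesh d L (q i) ∩ fundBox d L} = {|wrap L (q i s) - y s|} := by
    ext r
    simp only [Set.mem_ofPred_eq, Set.mem_singleton_iff]
    constructor
    · rintro ⟨t, rfl, ⟨⟨s', k, hk⟩, hbox⟩⟩
      by_cases hs : s' = s
      · subst hs
        have hb := hbox s'
        simp only [if_true] at hk hb
        rw [← eq_wrap hL hb.1 hb.2 hk]
        congr 1; ring
      · simp only [if_neg hs] at hk
        obtain ⟨l, hl, k', hk'⟩ := meshInter_coord hq hy.1 s'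
        exact absurd (by push_cast; linarith) (hq i l hl.symm s' (k' - k))
    · rintro rfl
      refine ⟨_, rfl, ?_⟩
      convert update_mem_box hL (p := q i) hy.2 s using 1
      ext t
      by_cases ht : t = s
      · subst ht; simp
      · simp [ht]
  unfold distDir
  rw [hset, csInf_singleton]

lemma box_coord {d : ℕ} {L : ℝ} (hL : 0 < L) {q : Fin (d + 1) → Fin d → ℝ}
    (hq : Distinct d L q) {i : Fin (d + 1)} {y : Fin d → ℝ}
    (hy : y ∈ meshInter d L q i ∩ fundBox d L) (s : Fin d) :
    ∃ l, l ≠ i ∧ y s = wrap L (q l s) := by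
  obtain ⟨l, hl, k, hk⟩ := meshInter_coord hq hy.1 s
  exact ⟨l, hl, eq_wrap hL (hy.2 s).1 (hy.2 s).2 hk⟩

lemma dev_le {d : ℕ} (hd : 1 ≤ d) {L M : ℝ} (hL : 0 < L) {q : Fin (d + 1) → Fin d → ℝ}
    (hq : Distinct d L q) {i : Fin (d + 1)}
    (hM : ∀ j, i ≠ j → ∀ s, |wrap L (q i s) - wrap L (q j s)| ≤ M) {y : Fin d → ℝ}
    (hy : y ∈ meshInter d L q i ∩ fundBox d L) :
    dev d (mesh d L (q i) ∩ fundBox d L) y ≤ M := by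
  have : Nonempty (Fin d) := ⟨⟨0, hd⟩⟩
  apply ciSup_le
  intro s
  rw [distDir_eq hL hq hy]
  obtain ⟨l, hl, h⟩ := box_coord hL hq hy s
  rw [h]
  exact hM l hl.symm s

lemma boxDev_le {d : ℕ} (hd : 1 ≤ d) {L M : ℝ} (hL : 0 < L) {q : Fin (d + 1) → Fin d → ℝ}
    (hq : Distinct d L q) {i : Fin (d + 1)}
    (hM : ∀ j, i ≠ j → ∀ s, |wrap L (q i s) - wrap L (q j s)| ≤ M) : boxDev d L q i ≤ M := by
  obtain ⟨y, hy, -⟩ := exists_box_point hL q (Fin.succAbove_ne i ⟨0, hd⟩).symm ⟨0, hd⟩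
  refine csSup_le ⟨_, y, hy, rfl⟩ ?_
  rintro _ ⟨y, hy, rfl⟩
  exact dev_le hd hL hq hM hy

lemma le_boxDev {d : ℕ} (hd : 1 ≤ d) {L : ℝ} (hL : 0 < L) {q : Fin (d + 1) → Fin d → ℝ}
    (hq : Distinct d L q) {i j : Fin (d + 1)} (hij : i ≠ j) (s : Fin d) :
    |wrap L (q i s) - wrap L (q j s)| ≤ boxDev d L q i := by
  obtain ⟨y, hy, hys⟩ := exists_box_point hL q hij s
  have h1 : |wrap L (q i s) - wrap L (q j s)| ≤ dev d (mesh d L (q i) ∩ fundBox d L) y := by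
    rw [← hys, ← distDir_eq hL hq hy s]
    exact le_ciSup (f := fun k => distDir d (mesh d L (q i) ∩ fundBox d L) y k)
      (Set.finite_range _).bddAbove s
  refine h1.trans (le_csSup ⟨L, ?_⟩ ⟨y, hy, rfl⟩)
  rintro _ ⟨y, hy, rfl⟩
  exact dev_le hd hL hq (fun j _ s => (abs_wrap_sub_wrap_lt hL _ _).le) hy

/-! ### Adjacency as uniform separation over all generations -/

/-- The initial point of the generation of sidelength `n^k`, for `k : ℤ`. For `k ≤ 0` the
truncation `k.toNat = 0` makes the location term vanish. -/
noncomputable def offset (n d : ℕ) (δ : Fin d → ℝ) (a : ℕ → Fin d → ℕ) (k : ℤ) (s : Fin d) : ℝ :=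
  δ s + (locFun n d a k.toNat s : ℝ)

lemma offset_natCast (n d : ℕ) (δ : Fin d → ℝ) (a : ℕ → Fin d → ℕ) (j : ℕ) (s : Fin d) :
    offset n d δ a j s = δ s + (locFun n d a j s : ℝ) := by
  simp [offset]

lemma offset_neg (n d : ℕ) (δ : Fin d → ℝ) (a : ℕ → Fin d → ℕ) (m : ℕ) :
    offset n d δ a (-(m : ℤ)) = δ := by
  ext s; simp [offset, locFun]

lemma mem_gridRep_iff {n d : ℕ} {δ : Fin d → ℝ} {a : ℕ → Fin d → ℕ} {Q : Set (Fin d → ℝ)} :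
    Q ∈ GridRep n d δ a ↔ ∃ (k : ℤ) (v : Fin d → ℤ),
      Q = HalfOpenCube d (fun i => offset n d δ a k i + (v i) * (n : ℝ) ^ k) ((n : ℝ) ^ k) := by
  constructor
  · rintro (⟨m, v, rfl⟩ | ⟨j, v, -, rfl⟩)
    · exact ⟨-m, v, by rw [offset_neg]⟩
    · exact ⟨j, v, by simp only [offset_natCast, zpow_natCast]⟩
  · rintro ⟨k, v, rfl⟩
    rcases le_or_gt k 0 with hk | hk
    · obtain ⟨m, rfl⟩ : ∃ m : ℕ, k = -m := ⟨(-k).toNat, by omega⟩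
      exact Or.inl ⟨m, v, by rw [offset_neg]⟩
    · obtain ⟨j, rfl⟩ : ∃ j : ℕ, k = j := ⟨k.toNat, by omega⟩
      exact Or.inr ⟨j, v, by omega, by simp only [offset_natCast, zpow_natCast]⟩

lemma locFun_sub (n d : ℕ) (a : ℕ → Fin d → ℕ) {j' j : ℕ} (h : j' ≤ j) (s : Fin d) :
    ∃ z : ℤ, locFun n d a j s - locFun n d a j' s = z * (n : ℤ) ^ j' := by
  induction j, h using Nat.le_induction with
  | base => exact ⟨0, by simp⟩
  | succ j hj ih =>
    obtain ⟨z, hz⟩ := ih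
    refine ⟨z + (n : ℤ) ^ (j - j') * a j s, ?_⟩
    have hp : (n : ℤ) ^ j = (n : ℤ) ^ (j - j') * (n : ℤ) ^ j' := by
      rw [← pow_add]; congr 1; omega
    have : locFun n d a (j + 1) s = locFun n d a j s + (n : ℤ) ^ j * a j s := by
      simp [locFun, Finset.sum_range_succ]
    rw [this, hp]
    linear_combination hz

/-- The hyperplanes of a coarse generation are hyperplanes of every finer one. -/
lemma offset_nested {n d : ℕ} (hn : 2 ≤ n) (δ : Fin d → ℝ) (a : ℕ → Fin d → ℕ) {k' k : ℤ}
    (h : k' ≤ k) (s : Fin d) (z : ℤ) :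
    ∃ w : ℤ, offset n d δ a k s + z * (n : ℝ) ^ k = offset n d δ a k' s + w * (n : ℝ) ^ k' := by
  have hn0 : (n : ℝ) ≠ 0 := by positivity
  have hpow : (n : ℝ) ^ k = ((n : ℤ) ^ (k - k').toNat : ℤ) * (n : ℝ) ^ k' := by
    push_cast
    rw [← zpow_natCast, ← zpow_add₀ hn0]; congr 1; omega
  obtain ⟨z₁, hz₁⟩ := locFun_sub n d a (Int.toNat_le_toNat h) s
  have hpow' : (n : ℝ) ^ k'.toNat = ((n : ℤ) ^ (k'.toNat - k').toNat : ℤ) * (n : ℝ) ^ k' := by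
    push_cast
    rw [← zpow_natCast, ← zpow_natCast, ← zpow_add₀ hn0]; congr 1; omega
  have hz₂ : (locFun n d a k.toNat s : ℝ) - locFun n d a k'.toNat s = z₁ * (n : ℝ) ^ k'.toNat := by
    exact_mod_cast hz₁
  refine ⟨z * (n : ℤ) ^ (k - k').toNat + z₁ * (n : ℤ) ^ (k'.toNat - k').toNat, ?_⟩
  rw [hpow'] at hz₂
  unfold offset
  rw [hpow]
  push_cast at hz₂ ⊢
  linear_combination hz₂

lemma cube_subset {d : ℕ} {x y : Fin d → ℝ} {ℓ s : ℝ} (hℓ : 0 < ℓ)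
    (h : HalfOpenCube d x ℓ ⊆ HalfOpenCube d y s) (t : Fin d) :
    y t ≤ x t ∧ x t + ℓ ≤ y t + s := by
  refine ⟨(h (show x ∈ HalfOpenCube d x ℓ from fun i => ⟨le_rfl, by linarith⟩) t).1, ?_⟩
  apply le_of_forall_pos_lt_add
  intro ε hε
  have hm : (fun i => x i + (ℓ - min ε ℓ / 2)) ∈ HalfOpenCube d x ℓ := by
    intro i
    have : 0 < min ε ℓ := lt_min hε hℓ
    have h2 := min_le_right ε ℓ
    exact ⟨by linarith, by linarith⟩
  have := (h hm t).2
  have h2 := min_le_left ε ℓ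
  linarith

/-- If a cube lies in a mesh cube, then no hyperplane of that mesh cuts its interior. -/
lemma no_cut {p x v ℓ L : ℝ} {k z : ℤ} (hL : 0 < L) (h1 : p + k * L ≤ x)
    (h2 : x + ℓ ≤ p + k * L + L) (hv : v = p + z * L) (hx : x < v) (hx' : v < x + ℓ) : False := by
  have e1 : (k : ℝ) < z := by
    by_contra hc; push Not at hc; nlinarith
  have e2 : (z : ℝ) < k + 1 := by
    by_contra hc; push Not at hc; nlinarith
  have e1' : k < z := by exact_mod_cast e1
  have e2' : z < k + 1 := by exact_mod_cast e2
  omega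

/-- Adjacency is equivalent to the initial points being separated, coordinate by coordinate and
relative to the sidelength, uniformly in all generations. -/
lemma adjacent_iff {n d : ℕ} (hn : 2 ≤ n) (hd : 1 ≤ d)
    (δ : Fin (d + 1) → Fin d → ℝ) (a : Fin (d + 1) → ℕ → Fin d → ℕ) :
    IsAdjacentFamily n d (d + 1) (fun i => GridRep n d (δ i) (a i)) ↔
      ∃ c > (0 : ℝ), ∀ k : ℤ,
        Separated d ((n : ℝ) ^ k) (fun i => offset n d (δ i) (a i) k) (c * (n : ℝ) ^ k) := by
  have hn0 : (0 : ℝ) < n := by positivity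
  have hn1 : (1 : ℝ) < n := by exact_mod_cast hn
  constructor
  · rintro ⟨C, hC, h⟩
    refine ⟨1 / C, by positivity, fun k i j hij s z => ?_⟩
    by_contra hlt
    push Not at hlt
    have hL : (0 : ℝ) < (n : ℝ) ^ k := by positivity
    obtain ⟨σ, hs, -, hσ⟩ := exists_assignment hij s
    set o := fun l => offset n d (δ l) (a l) k with ho
    set ℓ := 1 / C * (n : ℝ) ^ k with hℓ
    have hℓ0 : 0 < ℓ := by positivity
    -- The cube of side `ℓ` whose interior is cut by a hyperplane of every grid: those of `i`
    -- and `j` share the coordinate `s`, where it is centred at their midpoint.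
    let x : Fin d → ℝ := fun t =>
      if t = s then (o i s + o j s + z * (n : ℝ) ^ k) / 2 - ℓ / 2 else o (σ t) t - ℓ / 2
    obtain ⟨l, R, hR, hsub, y, r, hRy, hr⟩ := h x ℓ hℓ0
    obtain ⟨k', v, rfl⟩ := mem_gridRep_iff.mp hR
    have hL' : (0 : ℝ) < (n : ℝ) ^ k' := by positivity
    have hkk : k' ≤ k := by
      have := cube_subset hL' hRy.subset ⟨0, hd⟩
      have h3 : (n : ℝ) ^ k' ≤ (n : ℝ) ^ k := by
        have : C * ℓ = (n : ℝ) ^ k := by rw [hℓ]; field_simp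
        linarith
      exact (zpow_le_zpow_iff_right₀ hn1).mp h3
    have hcut : ∃ (t : Fin d) (w : ℤ), x t < o l t + w * (n : ℝ) ^ k ∧
        o l t + w * (n : ℝ) ^ k < x t + ℓ := by
      rw [abs_lt] at hlt
      have hxs : x s = (o i s + o j s + z * (n : ℝ) ^ k) / 2 - ℓ / 2 := if_pos rfl
      rcases eq_or_ne l i with rfl | hli
      · refine ⟨s, 0, ?_, ?_⟩ <;> rw [hxs] <;> push_cast <;> linarith
      · obtain ⟨t, rfl⟩ := hσ l hli
        rcases eq_or_ne t s with rfl | hts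
        · rw [hs]
          refine ⟨t, z, ?_, ?_⟩ <;> rw [hxs] <;> linarith
        · have hxt : x t = o (σ t) t - ℓ / 2 := if_neg hts
          refine ⟨t, 0, ?_, ?_⟩ <;> rw [hxt] <;> push_cast <;> linarith
    obtain ⟨t, w, hw1, hw2⟩ := hcut
    obtain ⟨w', hw'⟩ := offset_nested hn (δ l) (a l) hkk t w
    have hc := cube_subset hℓ0 hsub t
    exact no_cut hL' hc.1 hc.2 hw' hw1 hw2
  · rintro ⟨c, hc, h⟩
    refine ⟨n / c, by positivity, fun x ℓ hℓ => ?_⟩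
    obtain ⟨k₀, hk1, hk2⟩ := exists_mem_Ico_zpow (x := ℓ / c) (by positivity) hn1
    obtain ⟨k, rfl⟩ : ∃ k, k₀ = k - 1 := ⟨k₀ + 1, by ring⟩
    rw [sub_add_cancel, div_lt_iff₀ hc] at hk2
    rw [zpow_sub_one₀ hn0.ne', le_div_iff₀ hc] at hk1
    have hL : (0 : ℝ) < (n : ℝ) ^ k := by positivity
    set o := fun l => offset n d (δ l) (a l) k with ho
    have hfree : ∃ i, ∀ t, ∀ w : ℤ, ¬ (x t < o i t + w * (n : ℝ) ^ k ∧
        o i t + w * (n : ℝ) ^ k < x t + ℓ) := by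
      by_contra! hcon
      choose τ w hw1 hw2 using hcon
      obtain ⟨i, j, hij, hτ⟩ := Fintype.exists_ne_map_eq_of_card_lt τ (by simp)
      have h1 := hw1 j
      have h2 := hw2 j
      rw [← hτ] at h1 h2
      have h3 := h k i j hij (τ i) (w j - w i)
      refine absurd h3 (not_le.mpr ?_)
      change |o i (τ i) - o j (τ i) - _| < _
      push_cast
      rw [abs_lt]
      constructor <;> linarith [hw1 i, hw2 i]
    obtain ⟨i, hi⟩ := hfree
    let v : Fin d → ℤ := fun t => ⌊(x t - o i t) / (n : ℝ) ^ k⌋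
    refine ⟨i, _, mem_gridRep_iff.mpr ⟨k, v, rfl⟩, ?_, _, _, rfl, ?_⟩
    · intro y hy t
      have hv1 := Int.floor_le ((x t - o i t) / (n : ℝ) ^ k)
      have hv2 := Int.lt_floor_add_one ((x t - o i t) / (n : ℝ) ^ k)
      rw [le_div_iff₀ hL] at hv1
      rw [div_lt_iff₀ hL] at hv2
      have h3 := hi t (v t + 1)
      rw [not_and_or] at h3
      have h4 := hy t
      change o i t + v t * (n : ℝ) ^ k ≤ y t ∧ y t < o i t + v t * (n : ℝ) ^ k + (n : ℝ) ^ k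
      push_cast at h3
      refine ⟨by linarith, ?_⟩
      rcases h3 with h3 | h3
      · exact absurd (by linarith) h3
      · linarith
    · have : (n : ℝ) / c * ℓ = n * ℓ / c := by ring
      rw [this, le_div_iff₀ hc]
      have : (n : ℝ) * ((n : ℝ) ^ k * (n : ℝ)⁻¹ * c) = (n : ℝ) ^ k * c := by field_simp
      nlinarith

/-! ### Uniform constants -/

lemma exists_pos_iff_eventually {P : ℝ → Prop} (hP : ∀ c c', c' ≤ c → P c → P c') :
    (∃ c > (0 : ℝ), P c) ↔ ∀ᶠ c in nhdsWithin (0 : ℝ) (Set.Ioi 0), P c := by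
  constructor
  · rintro ⟨c, hc, h⟩
    filter_upwards [Ioo_mem_nhdsGT hc] with c' hc'
    exact hP c c' hc'.2.le h
  · intro h
    obtain ⟨c, h1, h2⟩ := (h.and self_mem_nhdsWithin).exists
    exact ⟨c, h2, h1⟩

lemma exists_pos_forall {ι : Type*} [Finite ι] {P : ι → ℝ → Prop}
    (hP : ∀ i c c', c' ≤ c → P i c → P i c') (h : ∀ i, ∃ c > (0 : ℝ), P i c) :
    ∃ c > (0 : ℝ), ∀ i, P i c := by
  rw [exists_pos_iff_eventually fun c c' hc hp i => hP i c c' hc (hp i), Filter.eventually_all]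
  exact fun i => (exists_pos_iff_eventually (hP i)).mp (h i)

/-- A property of positive constants inherited by smaller ones that holds at each `j` for some
constant, and for a common constant once `j` is large, holds for all `j` with a common one. -/
lemma exists_pos_forall_nat {P : ℕ → ℝ → Prop} (hP : ∀ i c c', c' ≤ c → P i c → P i c')
    (h : ∀ i, ∃ c > (0 : ℝ), P i c) (hev : ∃ c > (0 : ℝ), ∀ᶠ j in Filter.atTop, P j c) :
    ∃ c > (0 : ℝ), ∀ j, P j c := by
  obtain ⟨c, hc, hev⟩ := hev
  obtain ⟨N, hN⟩ := Filter.eventually_atTop.mp hev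
  obtain ⟨c', hc', h'⟩ := exists_pos_forall (ι := Fin N) (P := fun i => P i)
    (fun i => hP i) (fun i => h i)
  refine ⟨min c c', lt_min hc hc', fun j => ?_⟩
  rcases lt_or_ge j N with hj | hj
  · exact hP _ _ _ (min_le_right _ _) (h' ⟨j, hj⟩)
  · exact hP _ _ _ (min_le_left _ _) (hN j hj)

/-! ### Separation in the two regimes -/

lemma separated_small_iff {n d : ℕ} (hn : 2 ≤ n) (hd : 1 ≤ d) (δ : Fin (d + 1) → Fin d → ℝ) :
    (∃ c > (0 : ℝ), ∀ m : ℕ, Separated d ((n : ℝ) ^ (-(m : ℤ))) δ (c * (n : ℝ) ^ (-(m : ℤ)))) ↔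
      ∀ i : Fin (d + 1), ∃ C > (0 : ℝ), ∀ m : ℕ, C / (n : ℝ) ^ m ≤
        setDist d (mesh d ((n : ℝ) ^ (-(m : ℤ))) (δ i))
          (meshInter d ((n : ℝ) ^ (-(m : ℤ))) δ i) := by
  have hpow : ∀ (c : ℝ) (m : ℕ), c / (n : ℝ) ^ m = c * (n : ℝ) ^ (-(m : ℤ)) := by
    intro c m; rw [zpow_neg, zpow_natCast, div_eq_mul_inv]
  have hL : ∀ m : ℕ, (0 : ℝ) < (n : ℝ) ^ (-(m : ℤ)) := fun m => by positivity
  simp only [hpow]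
  constructor
  · rintro ⟨c, hc, h⟩ i
    exact ⟨c, hc, fun m => le_setDist_mesh hd (mul_pos hc (hL m)) (h m) i⟩
  · intro h
    obtain ⟨c, hc, h⟩ := exists_pos_forall (fun i c c' hcc hp m =>
      (mul_le_mul_of_nonneg_right hcc (hL m).le).trans (hp m)) h
    exact ⟨c, hc, fun m i j hij s z => (h i m).trans (setDist_mesh_le δ hij s z)⟩

lemma separated_iff {d : ℕ} {L : ℝ} (hL : 0 < L) (q : Fin (d + 1) → Fin d → ℝ) (c : ℝ) :
    Separated d L q c ↔ ∀ i j, i ≠ j → ∀ s, c ≤ |wrap L (q i s) - wrap L (q j s)| ∧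
      |wrap L (q i s) - wrap L (q j s)| ≤ L - c :=
  ⟨fun h i j hij s => (circ_iff hL _ _ _).mp (h i j hij s),
    fun h i j hij s => (circ_iff hL _ _ _).mpr (h i j hij s)⟩

lemma exists_sep {d : ℕ} {L : ℝ} (hL : 0 < L) {q : Fin (d + 1) → Fin d → ℝ}
    (hq : Distinct d L q) : ∃ c > 0, Separated d L q (c * L) := by
  have key : ∃ c > (0 : ℝ), ∀ p : Fin (d + 1) × Fin (d + 1) × Fin d, p.1 ≠ p.2.1 →
      ∀ z : ℤ, c * L ≤ |q p.1 p.2.2 - q p.2.1 p.2.2 - z * L| := by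
    apply exists_pos_forall
    · intro p c c' hcc h hp z
      exact (mul_le_mul_of_nonneg_right hcc hL.le).trans (h hp z)
    · rintro ⟨i, j, s⟩
      by_cases hij : i = j
      · exact ⟨1, one_pos, fun h => absurd hij h⟩
      · set t := |wrap L (q i s) - wrap L (q j s)| with ht
        have htL : t < L := abs_wrap_sub_wrap_lt hL _ _
        have ht0 : 0 < t := by
          rw [ht, abs_pos]
          intro h0
          refine hq i j hij s (-⌊q j s / L⌋ - -⌊q i s / L⌋) ?_
          have h1 := wrap_sub L (q i s)
          have h2 := wrap_sub L (q j s)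
          rw [Int.cast_sub]
          linarith
        refine ⟨min t (L - t) / L, div_pos (lt_min ht0 (by linarith)) hL, fun _ => ?_⟩
        rw [div_mul_cancel₀ _ hL.ne']
        refine (circ_iff hL _ _ _).mpr ⟨min_le_left _ _, ?_⟩
        have := min_le_right t (L - t)
        linarith
  obtain ⟨c, hc, h⟩ := key
  exact ⟨c, hc, fun i j hij s => h (i, j, s) hij⟩

lemma separated_large_iff {d : ℕ} (hd : 1 ≤ d) {L : ℕ → ℝ} (hL : ∀ j, 0 < L j)
    {q : ℕ → Fin (d + 1) → Fin d → ℝ} (hq : ∀ j, Distinct d (L j) (q j)) :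
    (∃ c > (0 : ℝ), ∀ j, Separated d (L j) (q j) (c * L j)) ↔
      ∀ i, 0 < Filter.liminf (fun j => boxDist d (L j) (q j) i / L j) Filter.atTop ∧
        Filter.liminf (fun j => boxDist d (L j) (q j) i / L j) Filter.atTop ≤
          Filter.limsup (fun j => boxDev d (L j) (q j) i / L j) Filter.atTop ∧
        Filter.limsup (fun j => boxDev d (L j) (q j) i / L j) Filter.atTop < 1 := by
  have hne : ∀ i : Fin (d + 1), ∃ j, i ≠ j := fun i => ⟨_, (Fin.succAbove_ne i ⟨0, hd⟩).symm⟩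
  have hfg : ∀ i j, boxDist d (L j) (q j) i / L j ≤ boxDev d (L j) (q j) i / L j := by
    intro i j
    obtain ⟨l, hl⟩ := hne i
    exact div_le_div_of_nonneg_right ((boxDist_le (hL j) (q j) hl ⟨0, hd⟩).trans
      (le_boxDev hd (hL j) (hq j) hl _)) (hL j).le
  have hf0 : ∀ i j, 0 ≤ boxDist d (L j) (q j) i / L j :=
    fun i j => div_nonneg (boxDist_nonneg _ _) (hL j).le
  have hg1 : ∀ i j, boxDev d (L j) (q j) i / L j ≤ 1 := by
    intro i j
    rw [div_le_one (hL j)]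
    exact boxDev_le hd (hL j) (hq j) fun _ _ _ => (abs_wrap_sub_wrap_lt (hL j) _ _).le
  have bf : ∀ i, Filter.IsBoundedUnder (· ≥ ·) Filter.atTop
      (fun j => boxDist d (L j) (q j) i / L j) :=
    fun i => Filter.isBoundedUnder_of ⟨0, hf0 i⟩
  have bf' : ∀ i, Filter.IsBoundedUnder (· ≤ ·) Filter.atTop
      (fun j => boxDist d (L j) (q j) i / L j) :=
    fun i => Filter.isBoundedUnder_of ⟨1, fun j => (hfg i j).trans (hg1 i j)⟩
  have bg : ∀ i, Filter.IsBoundedUnder (· ≥ ·) Filter.atTop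
      (fun j => boxDev d (L j) (q j) i / L j) :=
    fun i => Filter.isBoundedUnder_of ⟨0, fun j => (hf0 i j).trans (hfg i j)⟩
  have bg' : ∀ i, Filter.IsBoundedUnder (· ≤ ·) Filter.atTop
      (fun j => boxDev d (L j) (q j) i / L j) :=
    fun i => Filter.isBoundedUnder_of ⟨1, hg1 i⟩
  constructor
  · rintro ⟨c, hc, h⟩ i
    refine ⟨?_, ?_, ?_⟩
    · refine lt_of_lt_of_le hc (Filter.le_liminf_of_le (bf' i).isCoboundedUnder_ge ?_)
      refine Filter.Eventually.of_forall fun j => ?_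
      rw [le_div_iff₀ (hL j)]
      exact le_boxDist hd (hL j) (mul_pos hc (hL j)) (h j) i
    · refine (Filter.liminf_le_liminf (Filter.Eventually.of_forall (hfg i)) (bf i)
        (bg' i).isCoboundedUnder_ge).trans (Filter.liminf_le_limsup (bg' i) (bg i))
    · refine lt_of_le_of_lt (b := 1 - c)
        (Filter.limsup_le_of_le (bg i).isCoboundedUnder_le ?_) (by linarith)
      refine Filter.Eventually.of_forall fun j => ?_
      rw [div_le_iff₀ (hL j)]
      refine boxDev_le hd (hL j) (hq j) fun l hl s => ?_
      have := ((separated_iff (hL j) _ _).mp (h j) i l hl s).2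
      linarith
  · intro h
    have mono : ∀ j c c', c' ≤ c → Separated d (L j) (q j) (c * L j) → Separated d (L j) (q j) (c' * L j) :=
      fun j c c' hcc hs i l hil s z =>
        (mul_le_mul_of_nonneg_right hcc (hL j).le).trans (hs i l hil s z)
    refine exists_pos_forall_nat mono (fun j => exists_sep (hL j) (hq j)) ?_
    have key : ∃ c > (0 : ℝ), ∀ i, ∀ᶠ j in Filter.atTop,
        c ≤ boxDist d (L j) (q j) i / L j ∧ boxDev d (L j) (q j) i / L j ≤ 1 - c := by
      apply exists_pos_forall
      · intro i c c' hcc hev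
        filter_upwards [hev] with j hj
        exact ⟨hcc.trans hj.1, hj.2.trans (by linarith)⟩
      · intro i
        obtain ⟨h1, -, h3⟩ := h i
        obtain ⟨c₁, hc₁, hc₁'⟩ := exists_between h1
        obtain ⟨c₂, hc₂, hc₂'⟩ := exists_between h3
        refine ⟨min c₁ (1 - c₂), lt_min hc₁ (by linarith), ?_⟩
        filter_upwards [Filter.eventually_lt_of_lt_liminf hc₁' (bf i),
          Filter.eventually_lt_of_limsup_lt hc₂ (bg' i)] with j hj1 hj2
        have := min_le_right c₁ (1 - c₂)
        exact ⟨(min_le_left _ _).trans hj1.le, by linarith⟩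
    obtain ⟨c, hc, hev⟩ := key
    refine ⟨c, hc, ?_⟩
    filter_upwards [Filter.eventually_all.mpr hev] with j hj
    rw [separated_iff (hL j)]
    intro i l hil s
    obtain ⟨h1, h2⟩ := hj i
    rw [le_div_iff₀ (hL j)] at h1
    rw [div_le_iff₀ (hL j)] at h2
    exact ⟨h1.trans (boxDist_le (hL j) _ hil s),
      (le_boxDev hd (hL j) (hq j) hil s).trans (by linarith)⟩

/-! ### The characterization of adjacency -/

/-- Structure theorem of adjacency (Theorem 8.1): the `d+1` grids `𝒢(δ_i, ℒ_{𝐚_i})` with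
separated initial points are adjacent iff (i) each `δ_i` is an `n`-far vector with respect
to the small scale lattices generated by the remaining `d` initial points, and (ii) for each
`i`, the normalized distance from the modulated corner sets `(m𝒞)_{𝐚_i}^{δ_i}(j)` to the
large scale samplings of the remaining `d` tuples has positive liminf, and the normalized
maximal deviation has limsup `< 1`. -/
theorem stmt15 (n d : ℕ) (hn : 2 ≤ n) (hd : 1 ≤ d)
    (δ : Fin (d + 1) → Fin d → ℝ) (a : Fin (d + 1) → ℕ → Fin d → ℕ)
    (ha : ∀ i j s, a i j s < n)
    (hsep : ∀ i j : Fin (d + 1), i ≠ j → ∀ s : Fin d, ∀ z : ℤ, δ i s - δ j s ≠ (z : ℝ)) :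
    IsAdjacentFamily n d (d + 1) (fun i => GridRep n d (δ i) (a i)) ↔
      ((∀ i : Fin (d + 1), ∃ C > (0 : ℝ), ∀ m : ℕ,
          C / (n : ℝ) ^ m ≤
            setDist d (bdryPos n d (δ i) m)
              (⋂ (l : Fin (d + 1)) (_ : l ≠ i), bdryPos n d (δ l) m)) ∧
       (∀ i : Fin (d + 1),
          0 < Filter.liminf (fun j : ℕ =>
                setDist d (bdryNeg n d (δ i) (a i) j ∩ box n d j)
                  ((⋂ (l : Fin (d + 1)) (_ : l ≠ i), bdryNeg n d (δ l) (a l) j) ∩ box n d j)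
                  / (n : ℝ) ^ j) Filter.atTop ∧
          Filter.liminf (fun j : ℕ =>
                setDist d (bdryNeg n d (δ i) (a i) j ∩ box n d j)
                  ((⋂ (l : Fin (d + 1)) (_ : l ≠ i), bdryNeg n d (δ l) (a l) j) ∩ box n d j)
                  / (n : ℝ) ^ j) Filter.atTop ≤
            Filter.limsup (fun j : ℕ =>
                sSup ((fun y' => dev d (bdryNeg n d (δ i) (a i) j ∩ box n d j) y') ''
                    ((⋂ (l : Fin (d + 1)) (_ : l ≠ i), bdryNeg n d (δ l) (a l) j) ∩ box n d j))
                  / (n : ℝ) ^ j) Filter.atTop ∧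
          Filter.limsup (fun j : ℕ =>
                sSup ((fun y' => dev d (bdryNeg n d (δ i) (a i) j ∩ box n d j) y') ''
                    ((⋂ (l : Fin (d + 1)) (_ : l ≠ i), bdryNeg n d (δ l) (a l) j) ∩ box n d j))
                  / (n : ℝ) ^ j) Filter.atTop < 1)) := by
  have hLpos : ∀ j : ℕ, (0 : ℝ) < (n : ℝ) ^ j := fun j => by positivity
  -- A coincidence modulo `n^j` would make the difference of initial points an integer.
  have hdist : ∀ j : ℕ, Distinct d ((n : ℝ) ^ j)
      (fun l s => δ l s + (locFun n d (a l) j s : ℝ)) := by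
    intro j i l hil s z hz
    refine hsep i l hil s (z * (n : ℤ) ^ j - locFun n d (a i) j s + locFun n d (a l) j s) ?_
    push_cast
    linarith
  have hlarge := separated_large_iff hd hLpos hdist
  have hsmall := separated_small_iff hn hd δ
  have hsplit : (∃ c > (0 : ℝ), ∀ k : ℤ,
        Separated d ((n : ℝ) ^ k) (fun i => offset n d (δ i) (a i) k) (c * (n : ℝ) ^ k)) ↔
      (∃ c > (0 : ℝ), ∀ m : ℕ, Separated d ((n : ℝ) ^ (-(m : ℤ))) δ (c * (n : ℝ) ^ (-(m : ℤ)))) ∧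
      (∃ c > (0 : ℝ), ∀ j : ℕ, Separated d ((n : ℝ) ^ j)
        (fun l s => δ l s + (locFun n d (a l) j s : ℝ)) (c * (n : ℝ) ^ j)) := by
    constructor
    · rintro ⟨c, hc, h⟩
      refine ⟨⟨c, hc, fun m => ?_⟩, ⟨c, hc, fun j => ?_⟩⟩
      · simpa only [offset_neg] using h (-m)
      · intro i l hil s z
        simpa only [offset_natCast, zpow_natCast] using h j i l hil s z
    · rintro ⟨⟨c, hc, h⟩, ⟨c', hc', h'⟩⟩
      refine ⟨min c c', lt_min hc hc', fun k i l hil s z => ?_⟩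
      rcases le_or_gt k 0 with hk | hk
      · obtain ⟨m, rfl⟩ : ∃ m : ℕ, k = -m := ⟨(-k).toNat, by omega⟩
        simp only [offset_neg]
        exact (mul_le_mul_of_nonneg_right (min_le_left _ _) (by positivity)).trans
          (h m i l hil s z)
      · obtain ⟨j, rfl⟩ : ∃ j : ℕ, k = j := ⟨k.toNat, by omega⟩
        simp only [offset_natCast, zpow_natCast]
        exact (mul_le_mul_of_nonneg_right (min_le_right _ _) (by positivity)).trans
          (h' j i l hil s z)
  rw [adjacent_iff hn hd, hsplit, hsmall, hlarge]
  exact Iff.rfl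
end

section
/- Let n = 2 and d = 2. Let δ_1 = (1/3, 1/3), δ_2 = (2/3, 2/3), δ_3 = (1/5, 1/5), and define digit-vector sequences 𝐚_1 = (a_{1,j})_{j≥0} with a_{1,j} = (1,1) for even j and (0,0) for odd j, 𝐚_2 = (a_{2,j})_{j≥0} with a_{2,j} = (0,0) for even j and (1,1) for odd j, and 𝐚_3 = (a_{3,j})_{j≥0} with a_{3,j} = (0,0) for all j. Then the three dyadic grids 𝒢(δ_1, ℒ_{𝐚_1}), 𝒢(δ_2, ℒ_{𝐚_2}), 𝒢(δ_3, ℒ_{𝐚_3}) form an adjacent system in ℝ². -/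
/-!
At a fixed scale `s = 2 ^ p`, the cubes of the `i`-th grid have, in each coordinate, their faces at
the points of `β i + s ℤ` for some real `β i`. The three sets `β i + s ℤ` are pairwise at distance
at least `s / 15`. For `s = 2 ^ (-m)` this holds because `β = 1/3, 2/3, 1/5`, so that
`15 * 2 ^ m * (β i - β j)` is an integer not divisible by `15`. For `s = 2 ^ j` with `j > 0`, the
geometric sums in the location functions give `{β 0, β 1} = {s / 3, 2 * s / 3}`, while
`β 2 = 1 / 5 ≤ s / 10`.

An open interval of length at most `s / 15` therefore meets at most one of the three face sets. A
square has two coordinate projections, so at most two of the three grids have a face cutting a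
square of sidelength `ℓ ≤ s / 15`; in the remaining grid the square lies in a single cube
(`exists_good_grid`). Choosing `s` with `15 * ℓ < s ≤ 30 * ℓ` gives adjacency with `C = 30`.
-/

open scoped BigOperators

/-- Pigeonhole step: if the face sets `β i + s ℤ` of three grids are pairwise `s / 15`-separated,
then every square of sidelength at most `s / 15` lies in one cube of one of the grids. -/
lemma exists_good_grid (s : ℝ) (hs : 0 < s) (β : Fin 3 → ℝ)
    (hβ : ∀ i j, i < j → ∀ k : ℤ, s / 15 ≤ |β i - β j + k * s|)
    (x : Fin 2 → ℝ) (ℓ : ℝ) (hℓ : ℓ ≤ s / 15) :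
    ∃ (i : Fin 3) (k : Fin 2 → ℤ),
      HalfOpenCube 2 x ℓ ⊆ HalfOpenCube 2 (fun c => β i + k c * s) s := by
  have hlow : ∀ i c, β i + ⌊(x c - β i) / s⌋ * s ≤ x c := fun i c => by
    have := (le_div_iff₀ hs).1 (Int.floor_le ((x c - β i) / s))
    linarith
  have hup : ∀ i c, x c < β i + ⌊(x c - β i) / s⌋ * s + s := fun i c => by
    have := (div_lt_iff₀ hs).1 (Int.lt_floor_add_one ((x c - β i) / s))
    linarith
  by_contra hcon
  have hbad : ∀ i, ∃ c, β i + ⌊(x c - β i) / s⌋ * s + s < x c + ℓ := by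
    intro i
    by_contra! h
    exact hcon ⟨i, fun c => ⌊(x c - β i) / s⌋, fun y hy c =>
      ⟨(hlow i c).trans (hy c).1, (hy c).2.trans_le (h c)⟩⟩
  choose f hf using hbad
  have key : ∀ i j, i < j → f i ≠ f j := by
    intro i j hij hc
    have h1 := hf i
    have h2 := hf j
    have h3 := hup i (f i)
    have h4 := hup j (f j)
    rw [← hc] at h2 h4
    have h5 := hβ i j hij (⌊(x (f i) - β i) / s⌋ - ⌊(x (f i) - β j) / s⌋)
    push_cast at h5
    rcases le_abs.1 h5 with h | h <;> linarith
  have h01 := key 0 1 (by decide)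
  have h02 := key 0 2 (by decide)
  have h12 := key 1 2 (by decide)
  omega

lemma abs_add_int_mul_ge {s d : ℝ} (h1 : s / 15 ≤ |d|) (h2 : |d| ≤ 14 * s / 15) (k : ℤ) :
    s / 15 ≤ |d + k * s| := by
  have hs : 0 ≤ s := by linarith
  have h3 := abs_le.1 h2
  rcases lt_trichotomy k 0 with hk | hk | hk
  · have : (k : ℝ) ≤ -1 := by exact_mod_cast Int.le_sub_one_of_lt hk
    have := mul_le_mul_of_nonneg_right this hs
    exact le_abs.2 (Or.inr (by linarith))
  · simpa [hk] using h1
  · have : (1 : ℝ) ≤ k := by exact_mod_cast hk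
    have := mul_le_mul_of_nonneg_right this hs
    exact le_abs.2 (Or.inl (by linarith))

/-- A rational `a / 15` with `15 ∤ a * 2 ^ m` stays `2 ^ (-m) / 15` away from `2 ^ (-m) ℤ`. -/
lemma far_of_not_dvd (m : ℕ) (a : ℤ) (ha : ¬ (15 : ℤ) ∣ a * 2 ^ m) (k : ℤ) :
    (2 : ℝ) ^ (-(m : ℤ)) / 15 ≤ |(a : ℝ) / 15 + k * (2 : ℝ) ^ (-(m : ℤ))| := by
  have hp : (0 : ℝ) < 2 ^ (-(m : ℤ)) := by positivity
  have hpm : (2 : ℝ) ^ m * 2 ^ (-(m : ℤ)) = 1 := by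
    rw [zpow_neg, zpow_natCast]; exact mul_inv_cancel₀ (by positivity)
  have hN : (a * 2 ^ m + 15 * k : ℤ) ≠ 0 := fun h => ha ⟨-k, by linarith⟩
  have h1 : (1 : ℝ) ≤ |((a * 2 ^ m + 15 * k : ℤ) : ℝ)| := by
    exact_mod_cast Int.one_le_abs hN
  have h2 : (a : ℝ) / 15 + k * (2 : ℝ) ^ (-(m : ℤ))
      = ((a * 2 ^ m + 15 * k : ℤ) : ℝ) * ((2 : ℝ) ^ (-(m : ℤ)) / 15) := by
    push_cast
    linear_combination (-(a : ℝ) / 15) * hpm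
  rw [h2, abs_mul, abs_of_pos (by positivity : (0 : ℝ) < 2 ^ (-(m : ℤ)) / 15)]
  exact le_mul_of_one_le_left (by positivity) h1

lemma not_dvd_mul_two_pow {a : ℤ} (ha : ¬ (15 : ℤ) ∣ a) (m : ℕ) : ¬ (15 : ℤ) ∣ a * 2 ^ m := by
  intro h
  have hc : IsCoprime (15 : ℤ) (2 ^ m) := IsCoprime.pow_right ⟨1, -7, by norm_num⟩
  exact ha (hc.dvd_of_dvd_mul_right h)

/-- Closed forms of the face positions at scale `2 ^ j` of the first two grids: they are
`2 ^ j / 3` and `2 * 2 ^ j / 3`, in an order depending on the parity of `j`. -/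
lemma locFun_closed (c : Fin 2) (j : ℕ) :
    1 / 3 + (locFun 2 2 (fun j _ => if Even j then 1 else 0) j c : ℝ)
        = (if Even j then 1 else 2) * 2 ^ j / 3 ∧
    2 / 3 + (locFun 2 2 (fun j _ => if Even j then 0 else 1) j c : ℝ)
        = (if Even j then 2 else 1) * 2 ^ j / 3 := by
  induction j with
  | zero => simp [locFun]
  | succ j ih =>
    unfold locFun at ih ⊢
    obtain ⟨h1, h2⟩ := ih
    rw [Finset.sum_range_succ, Finset.sum_range_succ]
    by_cases hj : Even j
    · simp only [hj, Nat.even_add_one] at h1 h2 ⊢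
      push_cast at h1 h2 ⊢
      constructor
      · simp at h1 ⊢
        rw [pow_succ]; linarith
      · simp at h2 ⊢
        rw [pow_succ]; linarith
    · simp only [hj, Nat.even_add_one] at h1 h2 ⊢
      push_cast at h1 h2 ⊢
      constructor
      · simp at h1 ⊢
        rw [pow_succ]; linarith
      · simp at h2 ⊢
        rw [pow_succ]; linarith

/-- The pairwise separation of the face sets at the scales `2 ^ (-m)`. -/
lemma separated_fine (m : ℕ) (i j : Fin 3) (hij : i < j) (k : ℤ) :
    (2 : ℝ) ^ (-(m : ℤ)) / 15 ≤
      |(![1 / 3, 2 / 3, 1 / 5] : Fin 3 → ℝ) i - (![1 / 3, 2 / 3, 1 / 5] : Fin 3 → ℝ) j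
        + k * (2 : ℝ) ^ (-(m : ℤ))| := by
  have H : ∀ a : ℤ, ¬ (15 : ℤ) ∣ a → ∀ d : ℝ, d = a / 15 →
      (2 : ℝ) ^ (-(m : ℤ)) / 15 ≤ |d + k * (2 : ℝ) ^ (-(m : ℤ))| := fun a ha d hd => by
    rw [hd]; exact far_of_not_dvd m a (not_dvd_mul_two_pow ha m) k
  fin_cases i <;> fin_cases j <;> first | exact absurd hij (by decide) | skip
  · exact H (-5) (by decide) _ (by norm_num)
  · exact H 2 (by decide) _ (by norm_num)
  · exact H 7 (by decide) _ (by norm_num)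

/-- The pairwise separation of the face sets at the scales `2 ^ q`, `q > 0`. -/
lemma separated_coarse (q : ℕ) (hq : 0 < q) (i j : Fin 3) (hij : i < j) (k : ℤ) :
    (2 : ℝ) ^ q / 15 ≤
      |(![(if Even q then 1 else 2) * 2 ^ q / 3, (if Even q then 2 else 1) * 2 ^ q / 3, 1 / 5] :
          Fin 3 → ℝ) i
        - (![(if Even q then 1 else 2) * 2 ^ q / 3, (if Even q then 2 else 1) * 2 ^ q / 3, 1 / 5] :
          Fin 3 → ℝ) j + k * (2 : ℝ) ^ q| := by
  have h2 : (2 : ℝ) ≤ 2 ^ q := le_self_pow₀ (by norm_num) hq.ne'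
  generalize (2 : ℝ) ^ q = s at h2 ⊢
  apply abs_add_int_mul_ge
  · rw [le_abs]
    fin_cases i <;> fin_cases j <;> first | exact absurd hij (by decide) | skip
    all_goals
      by_cases hj : Even q <;> simp [hj] <;>
        first | (left; linarith) | (right; linarith)
  · rw [abs_le]
    fin_cases i <;> fin_cases j <;> first | exact absurd hij (by decide) | skip
    all_goals
      by_cases hj : Even q <;> simp [hj] <;> constructor <;> linarith

/-- The concrete example of Section 5: the three dyadic grids in `ℝ²` with initial points
`(1/3, 1/3)`, `(2/3, 2/3)`, `(1/5, 1/5)` and the indicated digit sequences form an adjacent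
system. -/
theorem stmt16 :
    IsAdjacentFamily 2 2 3
      ![GridRep 2 2 ![(1 : ℝ) / 3, (1 : ℝ) / 3] (fun j _ => if Even j then 1 else 0),
        GridRep 2 2 ![(2 : ℝ) / 3, (2 : ℝ) / 3] (fun j _ => if Even j then 0 else 1),
        GridRep 2 2 ![(1 : ℝ) / 5, (1 : ℝ) / 5] (fun _ _ => 0)] := by
  refine ⟨30, by norm_num, fun x ℓ hℓ => ?_⟩
  obtain ⟨p, hp1, hp2⟩ :=
    exists_mem_Ico_zpow (x := 15 * ℓ) (y := (2 : ℝ)) (by positivity) (by norm_num)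
  -- `2 ^ (p + 1)` is the scale with `15 * ℓ < s ≤ 30 * ℓ`.
  have hs : (2 : ℝ) ^ (p + 1) ≤ 30 * ℓ := by
    rw [zpow_add_one₀ (by norm_num)]; linarith
  generalize p + 1 = t at hs hp2
  have ht : (∃ m : ℕ, t = -(m : ℤ)) ∨ ∃ q : ℕ, 0 < q ∧ t = (q : ℤ) := by
    rcases le_or_gt t 0 with h | h
    · exact Or.inl ⟨t.natAbs, by omega⟩
    · exact Or.inr ⟨t.natAbs, by omega, by omega⟩
  have hconst : ∀ (a : ℝ) (c : Fin 2), (![a, a] : Fin 2 → ℝ) c = a := by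
    intro a c; fin_cases c <;> rfl
  rcases ht with ⟨m, rfl⟩ | ⟨q, hq, rfl⟩
  · obtain ⟨i, k, hk⟩ := exists_good_grid _ (by positivity) ![1 / 3, 2 / 3, 1 / 5]
      (separated_fine m) x ℓ (by linarith)
    refine ⟨i, _, ?_, hk, _, _, rfl, hs⟩
    fin_cases i <;> refine Or.inl ⟨m, k, ?_⟩ <;> simp [hconst]
  · rw [zpow_natCast] at hs hp2
    obtain ⟨i, k, hk⟩ := exists_good_grid _ (by positivity) _
      (separated_coarse q hq) x ℓ (by linarith)
    refine ⟨i, _, ?_, hk, _, _, rfl, hs⟩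
    fin_cases i <;> refine Or.inr ⟨q, k, hq, ?_⟩
    · simp only [hconst, (locFun_closed _ q).1]; simp
    · simp only [hconst, (locFun_closed _ q).2]; simp
    · simp [hconst, locFun]
end

section
/- Let n ≥ 2 and d = 2, and let δ_1 = (0, 0), δ_2 = (0, 1/3), δ_3 = (1/3, 1/3) ∈ ℝ². Then for any sequences of digit vectors 𝐚_1, 𝐚_2, 𝐚_3 in {0,…,n−1}², the n-adic grids 𝒢(δ_1, ℒ_{𝐚_1}), 𝒢(δ_2, ℒ_{𝐚_2}), 𝒢(δ_3, ℒ_{𝐚_3}) do not form an adjacent system in ℝ² (since (δ_1)_1 = (δ_2)_1, even though the initial points are pairwise distinct). -/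
/-!
In each of the three grids the point `p = (0, 1/3)` lies on a hyperplane that no cube of
generation `m ≥ 0` crosses: in the first two because its first coordinate is that of the
initial point, in the third because its second coordinate is. So a cube of sidelength `1 / C`
with `p` in its interior lies in no cube of generation `m ≥ 0` of any of the three grids,
whatever the value of `C` (`one_lt_of_straddle`). The cubes of negative generation have
sidelength at least `n > 1`, exceeding the allowed `C * (1 / C) = 1`, whatever the digit
sequences are.
-/

open scoped BigOperators

/-- A cube of the grid that contains both a point `p` with `p i = δ i` and a point strictly
below `p` in the `i`-th coordinate crosses a hyperplane that no cube of generation `m ≥ 0`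
crosses; hence it has negative generation and sidelength larger than `1`. -/
lemma one_lt_of_straddle {n d : ℕ} (hn : 2 ≤ n) {δ : Fin d → ℝ} {a : ℕ → Fin d → ℕ}
    {R : Set (Fin d → ℝ)} (hR : R ∈ GridRep n d δ a) {p q : Fin d → ℝ} (hp : p ∈ R)
    (hq : q ∈ R) {i : Fin d} (hpi : p i = δ i) (hqi : q i < p i)
    {y : Fin d → ℝ} {s : ℝ} (hy : R = HalfOpenCube d y s) : 1 < s := by
  have hn' : (1 : ℝ) < n := by exact_mod_cast hn
  rcases hR with ⟨m, k, hk⟩ | ⟨j, k, hj, hk⟩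
  · exfalso
    rw [hk] at hp hq
    have ht : (0 : ℝ) < (n : ℝ) ^ (-(m : ℤ)) := by positivity
    have h1 := (hp i).2
    have h2 := (hq i).1
    simp only at h1 h2
    generalize (n : ℝ) ^ (-(m : ℤ)) = t at *
    have h3 : (k i : ℝ) < 0 := by
      by_contra! h
      nlinarith [mul_nonneg h ht.le]
    have h4 : k i ≤ -1 := by
      have : k i < 0 := by exact_mod_cast h3
      omega
    have h5 : (k i : ℝ) ≤ -1 := by exact_mod_cast h4
    nlinarith
  · have ht : (1 : ℝ) < (n : ℝ) ^ j := one_lt_pow₀ hn' hj.ne'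
    -- The sidelength is compared through the lower corner `z` and the point `z + (1, …, 1)`.
    set z : Fin d → ℝ := fun i => δ i + (locFun n d a j i : ℝ) + (k i) * (n : ℝ) ^ j
    have hz : z ∈ R := by
      rw [hk]
      exact fun l => ⟨le_rfl, by linarith⟩
    have hz1 : (fun l => z l + 1) ∈ R := by
      rw [hk]
      exact fun l => ⟨by simp [z], by simpa [z] using ht⟩
    rw [hy] at hz hz1
    have h1 := (hz i).1
    have h2 := (hz1 i).2
    simp only at h2
    linarith

/-- The non-example of Section 7.2: with initial points `(0,0)`, `(0,1/3)`, `(1/3,1/3)`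
(whose first coordinates are not separated), no choice of digit sequences yields an adjacent
system of three `n`-adic grids in `ℝ²`. -/
theorem stmt17 (n : ℕ) (hn : 2 ≤ n)
    (a₁ a₂ a₃ : ℕ → Fin 2 → ℕ)
    (ha₁ : ∀ j s, a₁ j s < n) (ha₂ : ∀ j s, a₂ j s < n) (ha₃ : ∀ j s, a₃ j s < n) :
    ¬ IsAdjacentFamily n 2 3
        ![GridRep n 2 ![(0 : ℝ), (0 : ℝ)] a₁,
          GridRep n 2 ![(0 : ℝ), (1 : ℝ) / 3] a₂,
          GridRep n 2 ![(1 : ℝ) / 3, (1 : ℝ) / 3] a₃] := by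
  rintro ⟨C, hC, h⟩
  have hl : 0 < 1 / C := by positivity
  set p : Fin 2 → ℝ := ![0, 1 / 3] with hp
  set q : Fin 2 → ℝ := fun i => p i - 1 / C / 2 with hq
  obtain ⟨i, R, hR, hsub, y, s, hy, hs⟩ := h q (1 / C) hl
  have hpR : p ∈ R := hsub fun l => by constructor <;> simp only [hq] <;> linarith
  have hqR : q ∈ R := hsub fun l => by constructor <;> linarith
  have hlt : ∀ l, q l < p l := fun l => by simp only [hq]; linarith
  have hs1 : s ≤ 1 := by rwa [mul_one_div_cancel hC.ne'] at hs
  refine hs1.not_gt ?_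
  fin_cases i
  · exact one_lt_of_straddle hn hR hpR hqR (i := 0) (by simp [hp]) (hlt 0) hy
  · exact one_lt_of_straddle hn hR hpR hqR (i := 0) (by simp [hp]) (hlt 0) hy
  · exact one_lt_of_straddle hn hR hpR hqR (i := 1) (by simp [hp]) (hlt 1) hy
end
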